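/- arXiv:2202.04008 — 2 statements merged into one kernel-verified Lean document; each statement's English description precedes it below -/
import Mathlib

section
/- Let λ be a Borel probability measure on [0,1] and let 𝒫¹ and 𝒫² be two sequences of partitions that are log-balanced a.e. with respect to λ, with weight functions f₁ and f₂ respectively. Assume: (i) f₂ is nondecreasing; (ii) for each η ∈ (0,1) there exists ε > 0 such that ∑_{n=1}^∞ e^{−(1−ε)f₁(n) + (1+ε)f₂(m(n))} < +∞, where m(n) := f₂^{[-1]}((1−η)f₁(n)). Then liminf_{n→∞} f₂(L_n(x,𝒫¹,𝒫²))/f₁(n) ≥ 1 for λ-almost every x. -/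
open MeasureTheory Filter Set Asymptotics

noncomputable section

/-- A topological partition of `[0,1]`: an (automatically at most countable) collection of
pairwise disjoint nonempty open subintervals of `[0,1]` whose closures cover `[0,1]`. -/
def IsTopPartition (P : Set (Set ℝ)) : Prop :=
  P.Countable ∧
  (∀ I ∈ P, ∃ a b : ℝ, a < b ∧ 0 ≤ a ∧ b ≤ 1 ∧ I = Set.Ioo a b) ∧
  P.PairwiseDisjoint id ∧
  (⋃ I ∈ P, closure I) = Set.Icc (0 : ℝ) 1

/-- The set `E^Ps` of endpoints of the intervals of the partitions of the sequence `Ps`: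
the points of `[0,1]` not covered by the open intervals of some partition. -/
def endpointSet (Ps : ℕ → Set (Set ℝ)) : Set ℝ :=
  ⋃ n, (Set.Icc (0 : ℝ) 1 \ ⋃₀ Ps n)

/-- `I_n^Ps(x)`: the unique interval of the partition `P` containing `x`
(the empty set if there is none). -/
def cell (P : Set (Set ℝ)) (x : ℝ) : Set ℝ :=
  ⋃₀ {I | I ∈ P ∧ x ∈ I}

/-- A sequence of partitions is self-refining if every interval at depth `n+1` is contained
in an interval at depth `n`. -/
def SelfRefining (Ps : ℕ → Set (Set ℝ)) : Prop :=
  ∀ n, ∀ I ∈ Ps (n + 1), ∃ J ∈ Ps n, I ⊆ J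

/-- Strictly self-refining: self-refining with `P_{n+1} ≠ P_n` for all `n`. -/
def StrictSelfRefining (Ps : ℕ → Set (Set ℝ)) : Prop :=
  SelfRefining Ps ∧ ∀ n, Ps (n + 1) ≠ Ps n

/-- `Ps` is log-balanced a.e. with respect to `lam` with weight function `f`. -/
def LogBalancedAE (lam : Measure ℝ) (Ps : ℕ → Set (Set ℝ)) (f : ℕ → ℝ) : Prop :=
  lam (endpointSet Ps) = 0 ∧ Tendsto f atTop atTop ∧
    ∀ᵐ x ∂lam,
      Tendsto (fun n => -Real.log ((lam (cell (Ps n) x)).toReal) / f n) atTop (nhds 1)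

/-- `Ps` is log-balanced in measure with respect to `lam` with weight function `f`. -/
def LogBalancedInMeasure (lam : Measure ℝ) (Ps : ℕ → Set (Set ℝ)) (f : ℕ → ℝ) : Prop :=
  lam (endpointSet Ps) = 0 ∧ Tendsto f atTop atTop ∧
    TendstoInMeasure lam
      (fun n x => -Real.log ((lam (cell (Ps n) x)).toReal) / f n) atTop (fun _ => 1)

/-- The Lochs index `L_n(x, Ps¹, Ps²)`. -/
def lochsIndex (P1 P2 : ℕ → Set (Set ℝ)) (n : ℕ) (x : ℝ) : ℕ :=
  sSup {ℓ : ℕ | cell (P1 n) x ⊆ cell (P2 ℓ) x}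

/-- The generalized inverse `f^{[-1]}(y) = min {n : f n ≥ y}` of a weight function. -/
def weightInv (f : ℕ → ℝ) (y : ℝ) : ℕ := sInf {n : ℕ | y ≤ f n}

/-!
If the small interval `I_n^{P1}(x)` is not contained in the large interval `J = I_m^{P2}(x)`, then
it sticks out of `J` at one of its two ends, and at most one interval of `P1 n` sticks out at each
end. So the union of the intervals of `P1 n` of measure `≤ c` that cross some interval of `P2 m` of
measure `≥ d` has measure `≤ 2c/d`. With `c` and `d` read off from log-balancedness and
`m = f₂^{[-1]}((1 - η) f₁(n))`, these measures are summable by hypothesis, so Borel–Cantelli shows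
that the Lochs index is eventually at least `m`, a.e.; then let `η → 0`.
-/

section Crossing

variable {α : Type*} [LinearOrder α] {P : Set (Set α)} {J : Set α}

/-- A family of pairwise disjoint intervals (order-connected sets) of a linear order: a topological
partition without the requirements of openness, boundedness and covering. -/
structure IsIntervalPacking (P : Set (Set α)) : Prop where
  pairwiseDisjoint : P.PairwiseDisjoint id
  ordConnected : ∀ I ∈ P, I.OrdConnected

/-- The members of `P` that cross the boundary of `J`: they meet `J` without being contained
in it. -/
def crossing (P : Set (Set α)) (J : Set α) : Set (Set α) :=
  {I ∈ P | (I ∩ J).Nonempty ∧ ¬ I ⊆ J}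

namespace IsIntervalPacking

theorem mono {Q : Set (Set α)} (hQ : IsIntervalPacking Q) (h : P ⊆ Q) : IsIntervalPacking P :=
  ⟨hQ.pairwiseDisjoint.subset h, fun J hJ => hQ.ordConnected J (h hJ)⟩

theorem pairwise_disjoint_coe (hP : IsIntervalPacking P) :
    Pairwise (Function.onFun Disjoint ((↑) : P → Set α)) :=
  (pairwise_subtype_iff_pairwise_set P Disjoint).2 hP.pairwiseDisjoint

theorem dual (hP : IsIntervalPacking P) : IsIntervalPacking (α := αᵒᵈ) P :=
  ⟨hP.pairwiseDisjoint, fun I hI => (hP.ordConnected I hI).dual⟩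

theorem subsingleton_crossing_below (hP : IsIntervalPacking P) (hJ : J.OrdConnected) :
    {I ∈ P | ∃ x ∈ I ∩ J, ∃ y ∈ I \ J, y < x}.Subsingleton := by
  have below {x y z : α} (hx : x ∈ J) (hy : y ∉ J) (hyx : y < x) (hz : z ∈ J) : y < z := by
    by_contra! hzy
    exact hy (hJ.out hz hx ⟨hzy, hyx.le⟩)
  rintro I ⟨hI, x, ⟨hxI, hxJ⟩, y, ⟨hyI, hyJ⟩, hyx⟩
    I' ⟨hI', x', ⟨hxI', hxJ'⟩, y', ⟨hyI', hyJ'⟩, hyx'⟩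
  rcases le_total y y' with h | h
  · exact hP.pairwiseDisjoint.elim_set hI hI' y'
      ((hP.ordConnected I hI).out hyI hxI ⟨h, (below hxJ' hyJ' hyx' hxJ).le⟩) hyI'
  · exact hP.pairwiseDisjoint.elim_set hI hI' y hyI
      ((hP.ordConnected I' hI').out hyI' hxI' ⟨h, (below hxJ hyJ hyx hxJ').le⟩)

theorem subsingleton_crossing_above (hP : IsIntervalPacking P) (hJ : J.OrdConnected) :
    {I ∈ P | ∃ x ∈ I ∩ J, ∃ y ∈ I \ J, x < y}.Subsingleton :=
  hP.dual.subsingleton_crossing_below hJ.dual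

theorem measure_sUnion_crossing_le [MeasurableSpace α] (μ : Measure α) (hP : IsIntervalPacking P)
    (hJ : J.OrdConnected) (c : ENNReal) :
    μ (⋃₀ {I ∈ crossing P J | μ I ≤ c}) ≤ 2 * c := by
  have measure_le {S : Set (Set α)} (hS : S.Subsingleton) : μ (⋃₀ {I ∈ S | μ I ≤ c}) ≤ c := by
    rcases (hS.anti (sep_subset S fun I => μ I ≤ c)).eq_empty_or_singleton with h | ⟨I, h⟩
    · simp [h]
    · have hI : I ∈ {I ∈ S | μ I ≤ c} := h ▸ mem_singleton I
      simpa only [h, sUnion_singleton] using hI.2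
  have below_or_above : ⋃₀ {I ∈ crossing P J | μ I ≤ c} ⊆
      ⋃₀ {I ∈ {I ∈ P | ∃ x ∈ I ∩ J, ∃ y ∈ I \ J, y < x} | μ I ≤ c} ∪
        ⋃₀ {I ∈ {I ∈ P | ∃ x ∈ I ∩ J, ∃ y ∈ I \ J, x < y} | μ I ≤ c} := by
    rintro z ⟨I, ⟨⟨hI, ⟨x, hx⟩, hIJ⟩, hc⟩, hz⟩
    obtain ⟨y, hy⟩ := not_subset.1 hIJ
    have hyx : y ≠ x := fun h => hy.2 (h ▸ hx.2)
    exact hyx.lt_or_gt.imp (fun h => ⟨I, ⟨⟨hI, x, hx, y, hy, h⟩, hc⟩, hz⟩)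
      fun h => ⟨I, ⟨⟨hI, x, hx, y, hy, h⟩, hc⟩, hz⟩
  calc
    _ ≤ _ := (measure_mono below_or_above).trans (measure_union_le _ _)
    _ ≤ c + c := add_le_add (measure_le (hP.subsingleton_crossing_below hJ))
      (measure_le (hP.subsingleton_crossing_above hJ))
    _ = 2 * c := (two_mul c).symm

end IsIntervalPacking

end Crossing

section Cell

variable {P Q : Set (Set ℝ)}

theorem IsTopPartition.isIntervalPacking (hP : IsTopPartition P) : IsIntervalPacking P where
  pairwiseDisjoint := hP.2.2.1
  ordConnected I hI := by
    obtain ⟨a, b, -, -, -, rfl⟩ := hP.2.1 I hI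
    exact ordConnected_Ioo

theorem cell_eq_of_mem (hP : P.PairwiseDisjoint id) {I : Set ℝ} {x : ℝ} (hI : I ∈ P) (hx : x ∈ I) :
    cell P x = I := by
  refine Subset.antisymm (sUnion_subset fun J hJ => ?_) (subset_sUnion_of_mem ⟨hI, hx⟩)
  exact (hP.elim_set hJ.1 hI x hJ.2 hx).subset

theorem cell_mem_and_mem_cell (hP : P.PairwiseDisjoint id) {x : ℝ} (h : (cell P x).Nonempty) :
    cell P x ∈ P ∧ x ∈ cell P x := by
  obtain ⟨-, I, ⟨hI, hx⟩, -⟩ := h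
  exact (cell_eq_of_mem hP hI hx).symm ▸ ⟨hI, hx⟩

namespace IsIntervalPacking

theorem cell_mem_crossing (hP : IsIntervalPacking P) {J : Set ℝ} {x : ℝ} (hx : x ∈ J)
    (h : ¬ cell P x ⊆ J) : cell P x ∈ crossing P J ∧ x ∈ cell P x := by
  obtain ⟨y, hy, -⟩ := not_subset.1 h
  obtain ⟨hcell, hxcell⟩ := cell_mem_and_mem_cell hP.pairwiseDisjoint ⟨y, hy⟩
  exact ⟨⟨hcell, ⟨x, hxcell, hx⟩, h⟩, hxcell⟩

theorem tsum_measure_le (μ : Measure ℝ) (hQ : IsIntervalPacking Q) :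
    ∑' J : Q, μ J ≤ μ univ :=
  (tsum_meas_le_meas_iUnion_of_disjoint μ (fun J : Q => (hQ.ordConnected J J.2).measurableSet)
    hQ.pairwise_disjoint_coe).trans (measure_mono (subset_univ _))

theorem countable_measure_pos (μ : Measure ℝ) [SFinite μ] (hQ : IsIntervalPacking Q) :
    {J ∈ Q | 0 < μ J}.Countable := by
  have h : {J : Q | 0 < μ J}.Countable := Measure.countable_meas_pos_of_disjoint_iUnion
    (fun J : Q => (hQ.ordConnected J J.2).measurableSet) hQ.pairwise_disjoint_coe
  refine (h.image Subtype.val).mono ?_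
  rintro J ⟨hJ, hpos⟩
  exact ⟨⟨J, hJ⟩, hpos, rfl⟩

theorem mul_measure_not_cell_subset_le (μ : Measure ℝ) [SFinite μ] (hP : IsIntervalPacking P)
    (hQ : IsIntervalPacking Q) (c d : ENNReal) :
    d * μ {x | μ (cell P x) ≤ c ∧ d ≤ μ (cell Q x) ∧ ¬ cell P x ⊆ cell Q x} ≤
      2 * c * μ univ := by
  rcases eq_or_ne d 0 with rfl | hd
  · simp
  have hcount : {J ∈ Q | d ≤ μ J}.Countable := by
    refine (hQ.countable_measure_pos μ).mono ?_
    rintro J ⟨hJ, hdJ⟩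
    exact ⟨hJ, (pos_iff_ne_zero.2 hd).trans_le hdJ⟩
  have subset_crossing : {x | μ (cell P x) ≤ c ∧ d ≤ μ (cell Q x) ∧ ¬ cell P x ⊆ cell Q x} ⊆
      ⋃ J ∈ {J ∈ Q | d ≤ μ J}, ⋃₀ {I ∈ crossing P J | μ I ≤ c} := by
    rintro x ⟨hc, hdx, hsub⟩
    have hne : (cell Q x).Nonempty :=
      nonempty_of_measure_ne_zero (ne_bot_of_le_ne_bot hd hdx)
    obtain ⟨hcell, hx⟩ := cell_mem_and_mem_cell hQ.pairwiseDisjoint hne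
    obtain ⟨hcross, hxP⟩ := hP.cell_mem_crossing hx hsub
    exact mem_biUnion ⟨hcell, hdx⟩ ⟨cell P x, ⟨hcross, hc⟩, hxP⟩
  calc
    _ ≤ d * ∑' J : {J ∈ Q | d ≤ μ J}, μ (⋃₀ {I ∈ crossing P J | μ I ≤ c}) := by
      gcongr
      exact (measure_mono subset_crossing).trans (measure_biUnion_le μ hcount _)
    _ = ∑' J : {J ∈ Q | d ≤ μ J}, d * μ (⋃₀ {I ∈ crossing P J | μ I ≤ c}) :=
      ENNReal.tsum_mul_left.symm
    _ ≤ ∑' J : {J ∈ Q | d ≤ μ J}, μ J * (2 * c) := by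
      gcongr with J
      · exact J.2.2
      · exact hP.measure_sUnion_crossing_le μ (hQ.ordConnected J J.2.1) c
    _ = 2 * c * ∑' J : {J ∈ Q | d ≤ μ J}, μ J := by rw [ENNReal.tsum_mul_right, mul_comm]
    _ ≤ 2 * c * μ univ := by
      gcongr
      exact (hQ.mono (sep_subset Q _)).tsum_measure_le μ

end IsIntervalPacking

theorem ae_eventually_cell_subset_of_summable (μ : Measure ℝ) [IsFiniteMeasure μ]
    {P Q : ℕ → Set (Set ℝ)} (hP : ∀ n, IsIntervalPacking (P n)) (hQ : ∀ n, IsIntervalPacking (Q n))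
    {u v : ℕ → ℝ} (hs : Summable fun n => Real.exp (u n + v n)) :
    ∀ᵐ x ∂μ, ∀ᶠ n in atTop, μ.real (cell (P n) x) ≤ Real.exp (u n) →
      Real.exp (-v n) ≤ μ.real (cell (Q n) x) → cell (P n) x ⊆ cell (Q n) x := by
  let bad (n : ℕ) : Set ℝ := {x | μ (cell (P n) x) ≤ ENNReal.ofReal (Real.exp (u n)) ∧
    ENNReal.ofReal (Real.exp (-v n)) ≤ μ (cell (Q n) x) ∧ ¬ cell (P n) x ⊆ cell (Q n) x}
  have measure_bad_le (n : ℕ) :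
      μ (bad n) ≤ ENNReal.ofReal (Real.exp (u n + v n)) * (2 * μ univ) := by
    have exp_mul (a b : ℝ) : ENNReal.ofReal (Real.exp (a + b)) =
        ENNReal.ofReal (Real.exp a) * ENNReal.ofReal (Real.exp b) := by
      rw [Real.exp_add, ENNReal.ofReal_mul (Real.exp_pos a).le]
    calc
      μ (bad n) = ENNReal.ofReal (Real.exp (v n)) *
          (ENNReal.ofReal (Real.exp (-v n)) * μ (bad n)) := by
        rw [← mul_assoc, ← exp_mul, add_neg_cancel, Real.exp_zero, ENNReal.ofReal_one, one_mul]
      _ ≤ ENNReal.ofReal (Real.exp (v n)) *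
          (2 * ENNReal.ofReal (Real.exp (u n)) * μ univ) :=
        mul_le_mul' le_rfl ((hP n).mul_measure_not_cell_subset_le μ (hQ n) _ _)
      _ = ENNReal.ofReal (Real.exp (u n + v n)) * (2 * μ univ) := by rw [exp_mul]; ring
  have tsum_bad : ∑' n, μ (bad n) ≠ ⊤ := by
    refine ne_top_of_le_ne_top ?_ (ENNReal.tsum_le_tsum measure_bad_le)
    rw [ENNReal.tsum_mul_right]
    exact ENNReal.mul_ne_top hs.tsum_ofReal_ne_top (by finiteness)
  filter_upwards [ae_eventually_notMem tsum_bad] with x hx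
  filter_upwards [hx] with n hn hPn hQn
  by_contra hsub
  exact hn ⟨(ENNReal.le_ofReal_iff_toReal_le (measure_ne_top _ _) (Real.exp_pos _).le).2 hPn,
    (ENNReal.ofReal_le_iff_le_toReal (measure_ne_top _ _)).2 hQn, hsub⟩

end Cell

section LogRate

theorem eventually_exp_le_and_le_exp {ι : Type*} {l : Filter ι} {p f : ι → ℝ} (hp : ∀ i, 0 ≤ p i)
    (hf : Tendsto f l atTop) (h : Tendsto (fun i => -Real.log (p i) / f i) l (nhds 1))
    {a b : ℝ} (ha : a < 1) (hb : 1 < b) :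
    ∀ᶠ i in l, Real.exp (-(b * f i)) ≤ p i ∧ p i ≤ Real.exp (-(a * f i)) := by
  filter_upwards [h.eventually_const_lt ha, h.eventually_lt_const hb,
    h.eventually_const_lt zero_lt_one, hf.eventually_gt_atTop 0] with i hai hbi h0i hfi
  have hpi : 0 < p i := (hp i).lt_of_ne' fun h0 => by simp [h0] at h0i
  rw [lt_div_iff₀ hfi] at hai
  rw [div_lt_iff₀ hfi] at hbi
  rw [← Real.le_log_iff_exp_le hpi, ← Real.log_le_iff_le_exp hpi]
  constructor <;> linarith

theorem eventually_forall_le_mul {ι : Type*} {l : Filter ι} {p f : ι → ℝ} {q g : ℕ → ℝ}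
    (hp : ∀ i, 0 ≤ p i) (hq : ∀ n, 0 ≤ q n)
    (hf : Tendsto f l atTop) (hg : Tendsto g atTop atTop) (hmono : Monotone g)
    (hpf : Tendsto (fun i => -Real.log (p i) / f i) l (nhds 1))
    (hqg : Tendsto (fun n => -Real.log (q n) / g n) atTop (nhds 1)) {C : ℝ} (hC : 1 < C) :
    ∀ᶠ i in l, ∀ n, p i ≤ q n → g n ≤ C * f i := by
  obtain ⟨b, hb, hbC⟩ := exists_between hC
  have hC0 : 0 < C := zero_lt_one.trans hC
  obtain ⟨N, hN⟩ := eventually_atTop.1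
    (eventually_exp_le_and_le_exp hq hg hqg ((div_lt_one hC0).2 hbC) hC)
  filter_upwards [eventually_exp_le_and_le_exp hp hf hpf zero_lt_one hb, hf.eventually_ge_atTop 0,
    hf.eventually_ge_atTop (g N)] with i hpi hfi hNi n hpq
  rcases le_total n N with hn | hn
  · calc g n ≤ g N := hmono hn
      _ ≤ f i := hNi
      _ ≤ C * f i := le_mul_of_one_le_left hfi hC.le
  · have hexp : b / C * g n ≤ b * f i :=
      neg_le_neg_iff.1 (Real.exp_le_exp.1 ((hpi.1.trans hpq).trans (hN n hn).2))
    have hb0 : 0 < b := zero_lt_one.trans hb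
    refine le_of_mul_le_mul_left ?_ (div_pos hb0 hC0)
    calc b / C * g n ≤ b * f i := hexp
      _ = b / C * (C * f i) := by field_simp

end LogRate

section WeightInv

variable {f : ℕ → ℝ}

theorem le_apply_weightInv (hf : Tendsto f atTop atTop) (y : ℝ) : y ≤ f (weightInv f y) :=
  Nat.sInf_mem (hf.eventually_ge_atTop y).exists

theorem tendsto_weightInv (hf : Tendsto f atTop atTop) : Tendsto (weightInv f) atTop atTop := by
  refine tendsto_atTop.2 fun N => ?_
  have hlarge : ∀ᶠ y in atTop, ∀ n ∈ Finset.range N, f n < y :=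
    (Finset.range N).eventually_all.2 fun n _ => eventually_gt_atTop (f n)
  filter_upwards [hlarge] with y hy
  by_contra! hlt
  exact (hy _ (Finset.mem_range.2 hlt)).not_ge (le_apply_weightInv hf y)

end WeightInv

theorem le_liminf_apply_sSup_div {ι : Type*} {l : Filter ι} [l.NeBot] {S : ι → Set ℕ} {f : ι → ℝ}
    {g : ℕ → ℝ} (hf : Tendsto f l atTop) (hg : Tendsto g atTop atTop) (hmono : Monotone g)
    {a C : ℝ} (hupper : ∀ᶠ i in l, ∀ n ∈ S i, g n ≤ C * f i)
    (hlower : ∀ᶠ i in l, ∃ n ∈ S i, a * f i ≤ g n) :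
    a ≤ liminf (fun i => g (sSup (S i)) / f i) l := by
  have bounds : ∀ᶠ i in l, a ≤ g (sSup (S i)) / f i ∧ g (sSup (S i)) / f i ≤ C := by
    filter_upwards [hupper, hlower, hf.eventually_gt_atTop 0] with i hup ⟨n, hn, han⟩ hfi
    obtain ⟨M, hM⟩ := eventually_atTop.1 (hg.eventually_gt_atTop (C * f i))
    have hbdd : BddAbove (S i) :=
      ⟨M, fun k hk => le_of_not_ge fun hMk => (hM k hMk).not_ge (hup k hk)⟩
    rw [le_div_iff₀ hfi, div_le_iff₀ hfi]
    exact ⟨han.trans (hmono (le_csSup hbdd hn)), hup _ (Nat.sSup_mem ⟨n, hn⟩ hbdd)⟩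
  have hcobdd : IsCoboundedUnder (· ≥ ·) l fun i => g (sSup (S i)) / f i :=
    (isBoundedUnder_of_eventually_le (bounds.mono fun _ h => h.2)).isCoboundedUnder_ge
  exact le_liminf_of_le hcobdd (bounds.mono fun _ h => h.1)

theorem ae_eventually_cell_subset_cell (lam : Measure ℝ) [IsFiniteMeasure lam]
    {P1 P2 : ℕ → Set (Set ℝ)}
    (hP1 : ∀ n, IsIntervalPacking (P1 n)) (hP2 : ∀ n, IsIntervalPacking (P2 n))
    {f₁ f₂ : ℕ → ℝ} (hf₁ : Tendsto f₁ atTop atTop) (hf₂ : Tendsto f₂ atTop atTop)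
    (hlog₁ : ∀ᵐ x ∂lam,
      Tendsto (fun n => -Real.log (lam.real (cell (P1 n) x)) / f₁ n) atTop (nhds 1))
    (hlog₂ : ∀ᵐ x ∂lam,
      Tendsto (fun n => -Real.log (lam.real (cell (P2 n) x)) / f₂ n) atTop (nhds 1))
    {ε : ℝ} (hε : 0 < ε) {m : ℕ → ℕ} (hm : Tendsto m atTop atTop)
    (hsum : Summable fun n => Real.exp (-(1 - ε) * f₁ n + (1 + ε) * f₂ (m n))) :
    ∀ᵐ x ∂lam, ∀ᶠ n in atTop, cell (P1 n) x ⊆ cell (P2 (m n)) x := by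
  filter_upwards [ae_eventually_cell_subset_of_summable lam hP1 (fun n => hP2 (m n)) hsum,
    hlog₁, hlog₂] with x hx h₁ h₂
  have hlt : 1 - ε < 1 := sub_lt_self 1 hε
  have hgt : 1 < 1 + ε := lt_add_of_pos_right 1 hε
  filter_upwards [hx,
    eventually_exp_le_and_le_exp (fun _ => measureReal_nonneg) hf₁ h₁ hlt hgt,
    hm.eventually (eventually_exp_le_and_le_exp (fun _ => measureReal_nonneg) hf₂ h₂ hlt hgt)]
    with n hn hn₁ hn₂
  exact hn (by simpa only [neg_mul] using hn₁.2) hn₂.1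

theorem lochs_liminf_ae_general (lam : Measure ℝ) [IsFiniteMeasure lam]
    {P1 P2 : ℕ → Set (Set ℝ)}
    (hP1 : ∀ n, IsIntervalPacking (P1 n)) (hP2 : ∀ n, IsIntervalPacking (P2 n))
    {f₁ f₂ : ℕ → ℝ} (hf₁ : Tendsto f₁ atTop atTop) (hf₂ : Tendsto f₂ atTop atTop)
    (hlog₁ : ∀ᵐ x ∂lam,
      Tendsto (fun n => -Real.log (lam.real (cell (P1 n) x)) / f₁ n) atTop (nhds 1))
    (hlog₂ : ∀ᵐ x ∂lam,
      Tendsto (fun n => -Real.log (lam.real (cell (P2 n) x)) / f₂ n) atTop (nhds 1))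
    (hmono : Monotone f₂)
    (hsum : ∀ η ∈ Ioo (0 : ℝ) 1, ∃ ε > (0 : ℝ),
      Summable fun n =>
        Real.exp (-(1 - ε) * f₁ n + (1 + ε) * f₂ (weightInv f₂ ((1 - η) * f₁ n)))) :
    ∀ᵐ x ∂lam, 1 ≤ liminf (fun n => f₂ (lochsIndex P1 P2 n x) / f₁ n) atTop := by
  obtain ⟨η, -, hη, hη0⟩ := exists_seq_strictAnti_tendsto' (zero_lt_one' ℝ)
  have hsubset (k : ℕ) : ∀ᵐ x ∂lam, ∀ᶠ n in atTop,
      cell (P1 n) x ⊆ cell (P2 (weightInv f₂ ((1 - η k) * f₁ n))) x := by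
    obtain ⟨ε, hε, hs⟩ := hsum (η k) (hη k)
    have hscaled := hf₁.const_mul_atTop (sub_pos.2 (hη k).2)
    exact ae_eventually_cell_subset_cell lam hP1 hP2 hf₁ hf₂ hlog₁ hlog₂ hε
      ((tendsto_weightInv hf₂).comp hscaled) hs
  filter_upwards [ae_all_iff.2 hsubset, hlog₁, hlog₂] with x hx h₁ h₂
  have hupper : ∀ᶠ n in atTop, ∀ ℓ, cell (P1 n) x ⊆ cell (P2 ℓ) x → f₂ ℓ ≤ 2 * f₁ n :=
    (eventually_forall_le_mul (fun _ => measureReal_nonneg) (fun _ => measureReal_nonneg)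
      hf₁ hf₂ hmono h₁ h₂ one_lt_two).mono fun n hn ℓ hℓ => hn ℓ (measureReal_mono hℓ)
  have hlower (k : ℕ) : 1 - η k ≤ liminf (fun n => f₂ (lochsIndex P1 P2 n x) / f₁ n) atTop :=
    le_liminf_apply_sSup_div hf₁ hf₂ hmono hupper
      ((hx k).mono fun _ hn => ⟨_, hn, le_apply_weightInv hf₂ _⟩)
  exact le_of_tendsto' (by simpa only [sub_zero] using hη0.const_sub 1) hlower

/-- Proposition: liminf of the normalized Lochs index is at least 1, a.e. -/
theorem lochs_liminf_ae (lam : Measure ℝ) [IsProbabilityMeasure lam]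
    (hlam : lam (Set.Icc (0 : ℝ) 1)ᶜ = 0)
    (P1 P2 : ℕ → Set (Set ℝ))
    (hP1 : ∀ n, IsTopPartition (P1 n)) (hP2 : ∀ n, IsTopPartition (P2 n))
    (f₁ f₂ : ℕ → ℝ)
    (hb1 : LogBalancedAE lam P1 f₁) (hb2 : LogBalancedAE lam P2 f₂)
    (hmono : Monotone f₂)
    (hsum : ∀ η ∈ Set.Ioo (0 : ℝ) 1, ∃ ε > (0 : ℝ),
      Summable fun n =>
        Real.exp (-(1 - ε) * f₁ n + (1 + ε) * f₂ (weightInv f₂ ((1 - η) * f₁ n)))) :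
    ∀ᵐ x ∂lam,
      1 ≤ Filter.liminf (fun n => f₂ (lochsIndex P1 P2 n x) / f₁ n) atTop :=
  lochs_liminf_ae_general lam (fun n => (hP1 n).isIntervalPacking)
    (fun n => (hP2 n).isIntervalPacking) hb1.2.1 hb2.2.1 hb1.2.2 hb2.2.2 hmono hsum
end
end

section
/- Let λ be a Borel probability measure on [0,1]. Every self-refining sequence of partitions 𝒫 that is log-balanced a.e. with respect to λ admits a nondecreasing function g : ℕ → ℝ that is an a.e. weight function of 𝒫 with respect to λ. -/
open MeasureTheory Filter Set Asymptotics

noncomputable section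

/-!
For almost every `x`, the sequence `n ↦ -log λ(I_n(x))` is asymptotically equivalent to the given
weight function, so it is itself a weight function. By self-refinement the cells `I_n(x)` shrink,
and none of them is null: the later ones would be null too, and `Real.log 0 = 0` would contradict
divergence. Hence the sequence is nondecreasing, and it suffices to fix one such `x`.
-/

/-- The information function `x ↦ -log λ(I(x))` of a partition `P`, where `I(x)` is the interval
of `P` containing `x`. As `Real.log 0 = 0`, it is `0` at points whose cell is null. -/
def information (lam : Measure ℝ) (P : Set (Set ℝ)) (x : ℝ) : ℝ :=
  -Real.log (lam (cell P x)).toReal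

theorem monotone_neg_log_of_antitone {ι : Type*} [Preorder ι] [IsDirectedOrder ι] [Nonempty ι]
    {u : ι → ℝ} (hu : Antitone u) (hu₀ : ∀ i, 0 ≤ u i)
    (hlog : Tendsto (fun i => -Real.log (u i)) atTop atTop) :
    Monotone fun i => -Real.log (u i) := by
  have hpos (i : ι) : 0 < u i := by
    obtain ⟨j, hj, hij⟩ := ((hlog.eventually_ne_atTop 0).and (eventually_ge_atTop i)).exists
    have hne : u j ≠ 0 := fun h => hj (by simp [h])
    exact ((hu₀ j).lt_of_ne' hne).trans_le (hu hij)
  exact fun i j hij => neg_le_neg (Real.log_le_log (hpos j) (hu hij))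

section

variable {lam : Measure ℝ} {Ps : ℕ → Set (Set ℝ)} {f g : ℕ → ℝ}

theorem SelfRefining.antitone_cell (hself : SelfRefining Ps) (x : ℝ) :
    Antitone fun n => cell (Ps n) x := by
  refine antitone_nat_of_succ_le ?_
  rintro n y ⟨I, ⟨hI, hxI⟩, hyI⟩
  obtain ⟨J, hJ, hIJ⟩ := hself n I hI
  exact ⟨J, ⟨hJ, hIJ hxI⟩, hIJ hyI⟩

theorem SelfRefining.monotone_information [IsFiniteMeasure lam] (hself : SelfRefining Ps) {x : ℝ}
    (hx : Tendsto (fun n => information lam (Ps n) x) atTop atTop) :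
    Monotone fun n => information lam (Ps n) x :=
  monotone_neg_log_of_antitone (fun _ _ hmn => measureReal_mono (hself.antitone_cell x hmn))
    (fun _ => measureReal_nonneg) hx

theorem logBalancedAE_iff_isEquivalent :
    LogBalancedAE lam Ps f ↔ lam (endpointSet Ps) = 0 ∧ Tendsto f atTop atTop ∧
      ∀ᵐ x ∂lam, (fun n => information lam (Ps n) x) ~[atTop] f := by
  refine and_congr_right fun _ => and_congr_right fun hf => ?_
  have hf₀ : ∀ᶠ n in atTop, f n ≠ 0 := hf.eventually_ne_atTop 0
  simp only [isEquivalent_iff_tendsto_one hf₀]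
  rfl

theorem LogBalancedAE.congr_weight (hf : LogBalancedAE lam Ps f) (hfg : f ~[atTop] g) :
    LogBalancedAE lam Ps g := by
  rw [logBalancedAE_iff_isEquivalent] at hf ⊢
  obtain ⟨hE, hf_top, hf_equiv⟩ := hf
  exact ⟨hE, hfg.tendsto_atTop hf_top, hf_equiv.mono fun _ hx => hx.trans hfg⟩

theorem LogBalancedAE.ae_logBalancedAE_information (hf : LogBalancedAE lam Ps f) :
    ∀ᵐ x ∂lam, LogBalancedAE lam Ps fun n => information lam (Ps n) x := by
  obtain ⟨-, -, hf_equiv⟩ := logBalancedAE_iff_isEquivalent.1 hf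
  exact hf_equiv.mono fun _ hx => hf.congr_weight hx.symm

theorem exists_monotone_weight_general [IsFiniteMeasure lam] [NeZero lam]
    (hself : SelfRefining Ps) (hb : ∃ f, LogBalancedAE lam Ps f) :
    ∃ g : ℕ → ℝ, Monotone g ∧ LogBalancedAE lam Ps g := by
  obtain ⟨f, hf⟩ := hb
  obtain ⟨x, hx⟩ := hf.ae_logBalancedAE_information.exists
  exact ⟨fun n => information lam (Ps n) x, hself.monotone_information hx.2.1, hx⟩

end

/-- Proposition: every self-refining a.e. log-balanced sequence of partitions admits a
nondecreasing a.e. weight function. -/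
theorem exists_monotone_weight (lam : Measure ℝ) [IsProbabilityMeasure lam]
    (hlam : lam (Set.Icc (0 : ℝ) 1)ᶜ = 0)
    (Ps : ℕ → Set (Set ℝ)) (hPs : ∀ n, IsTopPartition (Ps n))
    (hself : SelfRefining Ps)
    (hb : ∃ f, LogBalancedAE lam Ps f) :
    ∃ g : ℕ → ℝ, Monotone g ∧ LogBalancedAE lam Ps g :=
  exists_monotone_weight_general hself hb
end
end
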